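/- Let x be a solution of the system with output y, and suppose that Ψ(t) is invertible for every t ∈ (t0, τ]. Then for every t ∈ (t0, τ]: x(t0) = Ψ(t)⁻¹ ( ∫_{t0}^t Φ(ρ)ᵀ C(ρ)ᵀ y(ρ) dρ − Ξ(t; x) ). -/

import Mathlib

open MeasureTheory Matrix Set Filter Topology

noncomputable section

/-- `x` is a solution of `ẋ = A(t)x + g(t,x)` on `[t0, τ]` (integral form, componentwise). -/
def IsSolution (n : ℕ) (t0 τ : ℝ) (A : ℝ → Matrix (Fin n) (Fin n) ℝ)
    (g : ℝ → (Fin n → ℝ) → (Fin n → ℝ)) (x : ℝ → (Fin n → ℝ)) : Prop :=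
  ContinuousOn x (Set.Icc t0 τ) ∧
    ∀ t ∈ Set.Icc t0 τ, ∀ i : Fin n,
      x t i = x t0 i + ∫ s in t0..t, ((A s).mulVec (x s) i + g s (x s) i)

/-- `Φ` is the fundamental matrix of `ẋ = A(t)x` on `[t0, τ]`. -/
def IsFundamental (n : ℕ) (t0 τ : ℝ) (A : ℝ → Matrix (Fin n) (Fin n) ℝ)
    (Φ : ℝ → Matrix (Fin n) (Fin n) ℝ) : Prop :=
  (∀ i j : Fin n, ContinuousOn (fun t => Φ t i j) (Set.Icc t0 τ)) ∧
    ∀ t ∈ Set.Icc t0 τ, ∀ i j : Fin n,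
      Φ t i j = (1 : Matrix (Fin n) (Fin n) ℝ) i j + ∫ s in t0..t, (A s * Φ s) i j

/-- `Ψ(t) = ∫_{t0}^t Φ(s)ᵀ C(s)ᵀ C(s) Φ(s) ds` (entrywise integral). -/
def Psi (n k0 : ℕ) (t0 : ℝ) (C : ℝ → Matrix (Fin k0) (Fin n) ℝ)
    (Φ : ℝ → Matrix (Fin n) (Fin n) ℝ) (t : ℝ) : Matrix (Fin n) (Fin n) ℝ :=
  fun i j => ∫ s in t0..t, ((Φ s)ᵀ * (C s)ᵀ * C s * Φ s) i j

/-- `Ξ(t; z) = ∫_{t0}^t Φ(ρ)ᵀ C(ρ)ᵀ C(ρ) Φ(ρ) (∫_{t0}^ρ Φ(s)⁻¹ g(s, z(s)) ds) dρ`. -/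
def Xi (n k0 : ℕ) (t0 : ℝ) (C : ℝ → Matrix (Fin k0) (Fin n) ℝ)
    (Φ : ℝ → Matrix (Fin n) (Fin n) ℝ) (g : ℝ → (Fin n → ℝ) → (Fin n → ℝ))
    (z : ℝ → (Fin n → ℝ)) (t : ℝ) : Fin n → ℝ :=
  fun i => ∫ ρ in t0..t,
    ((Φ ρ)ᵀ * (C ρ)ᵀ * C ρ * Φ ρ).mulVec
      (fun i' => ∫ s in t0..ρ, ((Φ s)⁻¹).mulVec (g s (z s)) i') i

/-- The map `F_T(t; z)`. -/
def Fmap (n k0 : ℕ) (t0 : ℝ) (C : ℝ → Matrix (Fin k0) (Fin n) ℝ)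
    (Φ : ℝ → Matrix (Fin n) (Fin n) ℝ) (g : ℝ → (Fin n → ℝ) → (Fin n → ℝ))
    (y : ℝ → (Fin k0 → ℝ)) (T : ℝ) (z : ℝ → (Fin n → ℝ)) (t : ℝ) : Fin n → ℝ :=
  (Φ t).mulVec
      ((Psi n k0 t0 C Φ T)⁻¹.mulVec
        ((fun i => ∫ ρ in t0..T, ((Φ ρ)ᵀ * (C ρ)ᵀ).mulVec (y ρ) i)
          - Xi n k0 t0 C Φ g z T))
    + (Φ t).mulVec (fun i => ∫ ρ in t0..t, ((Φ ρ)⁻¹).mulVec (g ρ (z ρ)) i)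

/-- supremum norm of `f` over `[a, b]`. -/
def supN (n : ℕ) (a b : ℝ) (f : ℝ → (Fin n → ℝ)) : ℝ :=
  ⨆ t : Set.Icc a b, ‖f (t : ℝ)‖

/-- Regularity of the data `A`, `C`, `g` on `[t0, τ]`:  `A`, `C` measurable and bounded;
`g` measurable in `t`, continuous in `x`, bounded on bounded sets. -/
def RegularData (n k0 : ℕ) (t0 τ : ℝ) (A : ℝ → Matrix (Fin n) (Fin n) ℝ)
    (C : ℝ → Matrix (Fin k0) (Fin n) ℝ)
    (g : ℝ → (Fin n → ℝ) → (Fin n → ℝ)) : Prop :=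
  (∀ i j, Measurable fun t => A t i j) ∧
  (∃ M : ℝ, ∀ t ∈ Set.Icc t0 τ, ∀ i j, |A t i j| ≤ M) ∧
  (∀ i j, Measurable fun t => C t i j) ∧
  (∃ M : ℝ, ∀ t ∈ Set.Icc t0 τ, ∀ i j, |C t i j| ≤ M) ∧
  (∀ v : Fin n → ℝ, ∀ i, Measurable fun t => g t v i) ∧
  (∀ t ∈ Set.Icc t0 τ, Continuous (g t)) ∧
  (∀ R > (0:ℝ), ∃ M : ℝ, ∀ t ∈ Set.Icc t0 τ, ∀ v : Fin n → ℝ, ‖v‖ ≤ R → ‖g t v‖ ≤ M)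

/-- Bounded and a.e. strongly measurable on `[a, b]`. -/
def BM (a b : ℝ) (f : ℝ → ℝ) : Prop :=
  AEStronglyMeasurable f (volume.restrict (Set.Icc a b)) ∧
    ∃ M : ℝ, ∀ t ∈ Set.Icc a b, |f t| ≤ M

lemma BM.add {a b : ℝ} {f h : ℝ → ℝ} (hf : BM a b f) (hh : BM a b h) :
    BM a b (fun t => f t + h t) := by
  obtain ⟨hf, M, hM⟩ := hf
  obtain ⟨hh, N, hN⟩ := hh
  exact ⟨hf.add hh, M + N, fun t ht =>
    (abs_add_le _ _).trans (add_le_add (hM t ht) (hN t ht))⟩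

lemma BM.mul {a b : ℝ} {f h : ℝ → ℝ} (hf : BM a b f) (hh : BM a b h) :
    BM a b (fun t => f t * h t) := by
  obtain ⟨hf, M, hM⟩ := hf
  obtain ⟨hh, N, hN⟩ := hh
  refine ⟨hf.mul hh, M * N, fun t ht => ?_⟩
  rw [abs_mul]
  exact mul_le_mul (hM t ht) (hN t ht) (abs_nonneg _) ((abs_nonneg _).trans (hM t ht))

lemma BM.sum {a b : ℝ} {ι : Type*} (s : Finset ι) {f : ι → ℝ → ℝ} (hf : ∀ i, BM a b (f i)) :
    BM a b (fun t => ∑ i ∈ s, f i t) := by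
  classical
  induction s using Finset.induction_on with
  | empty => exact ⟨by simpa using aestronglyMeasurable_const, 0, by simp⟩
  | insert i s hi ih =>
    simp only [Finset.sum_insert hi]
    exact (hf i).add ih

lemma BM.mulVec {a b : ℝ} {m : ℕ} {P : ℝ → Matrix (Fin m) (Fin m) ℝ} {v : ℝ → Fin m → ℝ}
    (i : Fin m) (hP : ∀ j, BM a b (fun t => P t i j)) (hv : ∀ j, BM a b (fun t => v t j)) :
    BM a b (fun t => (P t).mulVec (v t) i) := by
  simp only [Matrix.mulVec, dotProduct]
  exact BM.sum _ fun j => (hP j).mul (hv j)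

lemma BM.of_continuousOn {a b : ℝ} {f : ℝ → ℝ} (hf : ContinuousOn f (Set.Icc a b)) :
    BM a b f := by
  refine ⟨hf.aestronglyMeasurable measurableSet_Icc, ?_⟩
  obtain ⟨M, hM⟩ := isCompact_Icc.exists_bound_of_continuousOn hf
  exact ⟨M, fun t ht => hM t ht⟩

lemma BM.intervalIntegrable {a b : ℝ} {f : ℝ → ℝ} (hf : BM a b f) {t : ℝ}
    (ht : t ∈ Set.Icc a b) : IntervalIntegrable f volume a t := by
  obtain ⟨hf, M, hM⟩ := hf
  rw [intervalIntegrable_iff_integrableOn_Ioc_of_le ht.1]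
  have h : IntegrableOn f (Set.Icc a b) volume := by
    refine Integrable.of_bound (C := M) hf ?_
    filter_upwards [ae_restrict_mem measurableSet_Icc] with s hs using hM s hs
  exact h.mono_set (fun s hs => ⟨hs.1.le, hs.2.trans ht.2⟩)

lemma prim_continuousOn {a b : ℝ} {f : ℝ → ℝ} (hab : a ≤ b) (hf : BM a b f) :
    ContinuousOn (fun t => ∫ s in a..t, f s) (Set.Icc a b) := by
  have h := hf.intervalIntegrable (right_mem_Icc.2 hab)
  have := h.absolutelyContinuousOnInterval_intervalIntegral (c := a) (by simp)
  simpa [uIcc_of_le hab] using this.continuousOn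

lemma prod_rule {a b : ℝ} {u v : ℝ → ℝ} (U V : ℝ)
    (hu : IntervalIntegrable u volume a b) (hv : IntervalIntegrable v volume a b) :
    (U + ∫ s in a..b, u s) * (V + ∫ s in a..b, v s) =
      U * V + ∫ r in a..b, (u r * (V + ∫ s in a..r, v s) + (U + ∫ s in a..r, u s) * v r) := by
  have key : ∀ (W : ℝ) (w : ℝ → ℝ), IntervalIntegrable w volume a b →
      AbsolutelyContinuousOnInterval (fun t => W + ∫ s in a..t, w s) a b := by
    intro W w hw
    have h1 : AbsolutelyContinuousOnInterval (fun _ : ℝ => W) a b :=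
      (LipschitzWith.const W).lipschitzOnWith.absolutelyContinuousOnInterval
    exact h1.add (hw.absolutelyContinuousOnInterval_intervalIntegral (c := a) (by simp))
  have h := (key U u hu).integral_deriv_mul_eq_sub (key V v hv)
  simp only [intervalIntegral.integral_same, add_zero] at h
  rw [eq_comm, ← eq_sub_iff_add_eq', ← h]
  apply intervalIntegral.integral_congr_ae
  filter_upwards [hu.ae_hasDerivAt_integral, hv.ae_hasDerivAt_integral] with r h1 h2 h3
  have hr := uIoc_subset_uIcc h3
  rw [((h1 hr a (by simp)).const_add U).deriv, ((h2 hr a (by simp)).const_add V).deriv]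

lemma gronwall_zero {n : ℕ} {a b M : ℝ} (hab : a ≤ b) {A : ℝ → Matrix (Fin n) (Fin n) ℝ}
    (hA : ∀ t ∈ Set.Icc a b, ∀ i j, |A t i j| ≤ M) {d : ℝ → Fin n → ℝ}
    (hd : ∀ i, ContinuousOn (fun t => d t i) (Set.Icc a b))
    (h : ∀ t ∈ Set.Icc a b, ∀ i, d t i = ∫ s in a..t, (A s).mulVec (d s) i) :
    ∀ t ∈ Set.Icc a b, ∀ i, d t i = 0 := by
  set D : ℝ → ℝ := fun t => ∑ i, |d t i| with hD
  have hDc : ContinuousOn D (Set.Icc a b) :=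
    continuousOn_finsetSum _ fun i _ => (hd i).abs
  set E : ℝ → ℝ := Set.IccExtend hab (Set.domRestrict (Set.Icc a b) D) with hE
  have hEc : Continuous E := (continuousOn_iff_continuous_domRestrict.1 hDc).Icc_extend'
  have hED : ∀ t ∈ Set.Icc a b, E t = D t := fun t ht => by
    rw [hE, Set.IccExtend_of_mem _ _ ht]; rfl
  have hD0 : ∀ t, 0 ≤ D t := fun t => Finset.sum_nonneg fun i _ => abs_nonneg _
  have hG : ∀ t, HasDerivAt (fun t => ∫ s in a..t, E s) (E t) t := fun t =>
    intervalIntegral.integral_hasDerivAt_right (hEc.intervalIntegrable _ _)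
      hEc.stronglyMeasurable.stronglyMeasurableAtFilter hEc.continuousAt
  have hbound : ∀ t ∈ Set.Icc a b, D t ≤ (n * M) * ∫ s in a..t, E s := by
    intro t ht
    have h1 : ∀ i, |d t i| ≤ M * ∫ s in a..t, E s := by
      intro i
      rw [h t ht i, ← Real.norm_eq_abs, ← intervalIntegral.integral_const_mul]
      refine intervalIntegral.norm_integral_le_of_norm_le ht.1 ?_
        ((continuous_const.mul hEc).intervalIntegrable _ _)
      refine Filter.Eventually.of_forall fun s hs => ?_
      have hs' : s ∈ Set.Icc a b := ⟨hs.1.le, hs.2.trans ht.2⟩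
      rw [hED s hs', Real.norm_eq_abs, hD, Finset.mul_sum]
      simp only [Matrix.mulVec, dotProduct]
      refine (Finset.abs_sum_le_sum_abs _ _).trans (Finset.sum_le_sum fun j _ => ?_)
      rw [abs_mul]
      exact mul_le_mul_of_nonneg_right (hA s hs' i j) (abs_nonneg _)
    calc D t ≤ ∑ _i : Fin n, M * ∫ s in a..t, E s := Finset.sum_le_sum fun i _ => h1 i
      _ = _ := by simp; ring
  have hz : ∀ t ∈ Set.Icc a b, ∫ s in a..t, E s = 0 := by
    refine eq_zero_of_abs_deriv_le_mul_abs_self_of_eq_zero_right (f' := E) (K := n * M)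
      (fun t _ => (hG t).continuousAt.continuousWithinAt)
      (fun t _ => (hG t).hasDerivWithinAt) (by simp) ?_
    intro t ht
    have ht' : t ∈ Set.Icc a b := ⟨ht.1, ht.2.le⟩
    have h0 : 0 ≤ ∫ s in a..t, E s :=
      intervalIntegral.integral_nonneg ht.1 fun s hs => by
        rw [hED s ⟨hs.1, hs.2.trans ht.2.le⟩]; exact hD0 s
    rw [Real.norm_of_nonneg h0, hED t ht', Real.norm_of_nonneg (hD0 t)]
    exact hbound t ht'
  intro t ht i
  have h2 : D t ≤ 0 := by simpa [hz t ht] using hbound t ht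
  have h3 : |d t i| ≤ D t :=
    Finset.single_le_sum (f := fun i => |d t i|) (fun j _ => abs_nonneg _) (Finset.mem_univ i)
  exact abs_nonpos_iff.1 (h3.trans h2)

lemma BM_g {n k0 : ℕ} {t0 τ : ℝ} (ht : t0 ≤ τ) {A : ℝ → Matrix (Fin n) (Fin n) ℝ}
    {C : ℝ → Matrix (Fin k0) (Fin n) ℝ} {g : ℝ → (Fin n → ℝ) → (Fin n → ℝ)}
    (hreg : RegularData n k0 t0 τ A C g) {x : ℝ → Fin n → ℝ}
    (hx : ContinuousOn x (Set.Icc t0 τ)) (i : Fin n) :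
    BM t0 τ (fun t => g t (x t) i) := by
  classical
  obtain ⟨-, -, -, -, hgm, hgc, hgb⟩ := hreg
  constructor
  · set X : ℝ → Fin n → ℝ := Set.IccExtend ht (Set.domRestrict (Set.Icc t0 τ) x) with hX
    have hXc : Continuous X := (continuousOn_iff_continuous_domRestrict.1 hx).Icc_extend'
    have hm : Measurable (Function.uncurry
        (fun (v : Fin n → ℝ) (t : ℝ) => (Set.Icc t0 τ).indicator (fun t => g t v i) t)) := by
      refine measurable_uncurry_of_continuous_of_measurable ?_ ?_
      · intro t
        by_cases h : t ∈ Set.Icc t0 τ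
        · simp only [Set.indicator_of_mem h]
          exact (continuous_apply i).comp (hgc t h)
        · simp only [Set.indicator_of_notMem h]
          exact continuous_const
      · intro v
        exact (hgm v i).indicator measurableSet_Icc
    have hm2 := hm.comp (hXc.measurable.prodMk measurable_id)
    refine hm2.aestronglyMeasurable.congr ?_
    filter_upwards [ae_restrict_mem measurableSet_Icc] with s hs
    simp only [Function.comp, Function.uncurry, id, Set.indicator_of_mem hs]
    rw [hX, Set.IccExtend_of_mem _ _ hs]; rfl
  · obtain ⟨R, hR⟩ := isCompact_Icc.exists_bound_of_continuousOn hx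
    obtain ⟨M, hM⟩ := hgb (max R 1) (by positivity)
    exact ⟨M, fun t ht => (norm_le_pi_norm (g t (x t)) i).trans
      (hM t ht _ ((hR t ht).trans (le_max_left _ _)))⟩

lemma inv_entry_continuousOn {n : ℕ} {a b : ℝ} {Φ : ℝ → Matrix (Fin n) (Fin n) ℝ}
    (hc : ∀ i j : Fin n, ContinuousOn (fun t => Φ t i j) (Set.Icc a b))
    (hu : ∀ t ∈ Set.Icc a b, IsUnit (Φ t)) (i j : Fin n) :
    ContinuousOn (fun t => (Φ t)⁻¹ i j) (Set.Icc a b) := by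
  have hΦ : ContinuousOn Φ (Set.Icc a b) :=
    continuousOn_pi.2 fun i => continuousOn_pi.2 fun j => hc i j
  have h1 : ContinuousOn (fun t => (Φ t).det) (Set.Icc a b) :=
    (continuous_id.matrix_det).comp_continuousOn hΦ
  have h2 : ContinuousOn (fun t => (Φ t).adjugate i j) (Set.Icc a b) :=
    ((continuous_id.matrix_adjugate).matrix_elem i j).comp_continuousOn hΦ
  have h3 : ContinuousOn (fun t => (Φ t).det⁻¹ * (Φ t).adjugate i j) (Set.Icc a b) :=
    (h1.inv₀ fun t ht => ((Matrix.isUnit_iff_isUnit_det _).1 (hu t ht)).ne_zero).mul h2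
  refine h3.congr fun t _ => ?_
  simp [Matrix.inv_def, Ring.inverse_eq_inv']

lemma var_const {n k0 : ℕ} {t0 τ : ℝ} (ht : t0 ≤ τ)
    {A : ℝ → Matrix (Fin n) (Fin n) ℝ} {C : ℝ → Matrix (Fin k0) (Fin n) ℝ}
    {g : ℝ → (Fin n → ℝ) → (Fin n → ℝ)}
    (hreg : RegularData n k0 t0 τ A C g)
    {Φ : ℝ → Matrix (Fin n) (Fin n) ℝ} (hΦ : IsFundamental n t0 τ A Φ)
    (hΦinv : ∀ t ∈ Set.Icc t0 τ, IsUnit (Φ t))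
    {x : ℝ → (Fin n → ℝ)} (hx : IsSolution n t0 τ A g x) :
    ∀ t ∈ Set.Icc t0 τ, x t = (Φ t).mulVec
      (x t0 + fun i' => ∫ s in t0..t, ((Φ s)⁻¹).mulVec (g s (x s)) i') := by
  have hg := BM_g ht hreg hx.1
  obtain ⟨hAm, ⟨M, hM⟩, -⟩ := hreg
  obtain ⟨hΦc, hΦe⟩ := hΦ
  obtain ⟨hxc, hxe⟩ := hx
  have hA : ∀ i j, BM t0 τ (fun t => A t i j) := fun i j =>
    ⟨(hAm i j).aestronglyMeasurable, M, fun t ht => hM t ht i j⟩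
  have hΦb : ∀ i j, BM t0 τ (fun t => Φ t i j) := fun i j => .of_continuousOn (hΦc i j)
  have hxci : ∀ i, ContinuousOn (fun t => x t i) (Set.Icc t0 τ) := continuousOn_pi.1 hxc
  have hAΦ : ∀ i j, BM t0 τ (fun t => (A t * Φ t) i j) := fun i j => by
    simp only [Matrix.mul_apply]
    exact BM.sum _ fun k => (hA i k).mul (hΦb k j)
  have hAx : ∀ i, BM t0 τ (fun t => (A t).mulVec (x t) i) := fun i => by
    simp only [Matrix.mulVec, dotProduct]
    exact BM.sum _ fun k => (hA i k).mul (.of_continuousOn (hxci k))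
  set q : ℝ → Fin n → ℝ := fun s => ((Φ s)⁻¹).mulVec (g s (x s)) with hq
  have hqb : ∀ i, BM t0 τ (fun t => q t i) := fun i => by
    simp only [hq, Matrix.mulVec, dotProduct]
    exact BM.sum _ fun k => (BM.of_continuousOn (inv_entry_continuousOn hΦc hΦinv i k)).mul (hg k)
  set w : ℝ → Fin n → ℝ := fun t => x t0 + fun i' => ∫ s in t0..t, q s i' with hw
  have hwi : ∀ t i, w t i = x t0 i + ∫ s in t0..t, q s i := fun t i => rfl
  have hwc : ∀ i, ContinuousOn (fun t => w t i) (Set.Icc t0 τ) := fun i => by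
    simp only [hwi]
    exact continuousOn_const.add (prim_continuousOn ht (hqb i))
  have hwb : ∀ i, BM t0 τ (fun t => w t i) := fun i => .of_continuousOn (hwc i)
  have hz : ∀ t ∈ Set.Icc t0 τ, ∀ i, (Φ t).mulVec (w t) i =
      x t0 i + ∫ s in t0..t, ((A s).mulVec ((Φ s).mulVec (w s)) i + g s (x s) i) := by
    intro t htt i
    have hterm : ∀ j, Φ t i j * w t j = (1 : Matrix (Fin n) (Fin n) ℝ) i j * x t0 j +
        ∫ r in t0..t, ((A r * Φ r) i j * w r j + Φ r i j * q r j) := by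
      intro j
      rw [hΦe t htt i j, hwi, prod_rule _ _ ((hAΦ i j).intervalIntegrable htt)
        ((hqb j).intervalIntegrable htt)]
      congr 1
      apply intervalIntegral.integral_congr
      intro r hr
      rw [uIcc_of_le htt.1] at hr
      simp only
      rw [hΦe r ⟨hr.1, hr.2.trans htt.2⟩ i j, hwi]
    have hsum : (Φ t).mulVec (w t) i = ∑ j, Φ t i j * w t j := rfl
    rw [hsum, Finset.sum_congr rfl fun j _ => hterm j, Finset.sum_add_distrib,
      ← intervalIntegral.integral_finsetSum]
    · congr 1
      · change (1 : Matrix (Fin n) (Fin n) ℝ).mulVec (x t0) i = _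
        rw [Matrix.one_mulVec]
      · apply intervalIntegral.integral_congr
        intro r hr
        rw [uIcc_of_le htt.1] at hr
        have hr' : r ∈ Set.Icc t0 τ := ⟨hr.1, hr.2.trans htt.2⟩
        simp only [Finset.sum_add_distrib]
        change (A r * Φ r).mulVec (w r) i + (Φ r).mulVec (q r) i = _
        rw [hq, Matrix.mulVec_mulVec, Matrix.mulVec_mulVec,
          Matrix.mul_nonsing_inv _ ((Matrix.isUnit_iff_isUnit_det _).1 (hΦinv r hr')),
          Matrix.one_mulVec]
    · intro j _
      exact (((hAΦ i j).mul (hwb j)).add ((hΦb i j).mul (hqb j))).intervalIntegrable htt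
  have hzc : ∀ i, ContinuousOn (fun t => (Φ t).mulVec (w t) i) (Set.Icc t0 τ) := fun i => by
    simp only [Matrix.mulVec, dotProduct]
    exact continuousOn_finsetSum _ fun j _ => (hΦc i j).mul (hwc j)
  have hAz : ∀ i, BM t0 τ (fun t => (A t).mulVec ((Φ t).mulVec (w t)) i) := fun i =>
    BM.mulVec i (hA i) fun k => .of_continuousOn (hzc k)
  have hd := gronwall_zero ht hM (d := fun t => x t - (Φ t).mulVec (w t))
    (fun i => (hxci i).sub (hzc i)) (by
      intro t htt i
      rw [Pi.sub_apply, hxe t htt i, hz t htt i, add_sub_add_left_eq_sub,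
        ← intervalIntegral.integral_sub (((hAx i).add (hg i)).intervalIntegrable htt)
          (((hAz i).add (hg i)).intervalIntegrable htt)]
      apply intervalIntegral.integral_congr
      intro r _
      simp only [Matrix.mulVec_sub, Pi.sub_apply]
      ring)
  intro t htt
  funext i
  have := hd t htt i
  rw [Pi.sub_apply] at this
  linarith

theorem stmt5 (n k0 : ℕ) (hn : 1 ≤ n) (hk0 : 1 ≤ k0) (t0 τ : ℝ) (ht : t0 < τ)
    (A : ℝ → Matrix (Fin n) (Fin n) ℝ) (C : ℝ → Matrix (Fin k0) (Fin n) ℝ)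
    (g : ℝ → (Fin n → ℝ) → (Fin n → ℝ))
    (hreg : RegularData n k0 t0 τ A C g)
    (Φ : ℝ → Matrix (Fin n) (Fin n) ℝ) (hΦ : IsFundamental n t0 τ A Φ)
    (hΦinv : ∀ t ∈ Set.Icc t0 τ, IsUnit (Φ t))
    (x : ℝ → (Fin n → ℝ)) (hx : IsSolution n t0 τ A g x)
    (y : ℝ → (Fin k0 → ℝ)) (hy : ∀ t ∈ Set.Icc t0 τ, y t = (C t).mulVec (x t))
    (hΨ : ∀ t ∈ Set.Ioc t0 τ, IsUnit (Psi n k0 t0 C Φ t)) :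
    ∀ t ∈ Set.Ioc t0 τ,
      x t0 = (Psi n k0 t0 C Φ t)⁻¹.mulVec
        ((fun i => ∫ ρ in t0..t, ((Φ ρ)ᵀ * (C ρ)ᵀ).mulVec (y ρ) i)
          - Xi n k0 t0 C Φ g x t) := by
  intro t htt
  have ht' : t ∈ Set.Icc t0 τ := ⟨htt.1.le, htt.2⟩
  have hvc := var_const ht.le hreg hΦ hΦinv hx
  have hg := BM_g ht.le hreg hx.1
  obtain ⟨-, -, hCm, ⟨M, hM⟩, -⟩ := hreg
  have hC : ∀ i j, BM t0 τ (fun t => C t i j) := fun i j =>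
    ⟨(hCm i j).aestronglyMeasurable, M, fun t ht => hM t ht i j⟩
  have hΦb : ∀ i j, BM t0 τ (fun t => Φ t i j) := fun i j => .of_continuousOn (hΦ.1 i j)
  set K : ℝ → Matrix (Fin n) (Fin n) ℝ := fun s => (Φ s)ᵀ * (C s)ᵀ * C s * Φ s with hK
  have hKb : ∀ i j, BM t0 τ (fun t => K t i j) := fun i j => by
    simp only [hK, Matrix.mul_apply, Matrix.transpose_apply]
    exact BM.sum _ fun k => (BM.sum _ fun l =>
      (BM.sum _ fun m => (hΦb m i).mul (hC l m)).mul (hC l k)).mul (hΦb k j)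
  set p : ℝ → Fin n → ℝ := fun ρ i' => ∫ s in t0..ρ, ((Φ s)⁻¹).mulVec (g s (x s)) i' with hp
  have hpb : ∀ i, BM t0 τ (fun t => p t i) := fun i => by
    refine .of_continuousOn (prim_continuousOn ht.le ?_)
    exact BM.mulVec i
      (fun k => BM.of_continuousOn (inv_entry_continuousOn hΦ.1 hΦinv i k)) hg
  have hKp : ∀ i, BM t0 τ (fun t => (K t).mulVec (p t) i) := fun i =>
    BM.mulVec i (hKb i) hpb
  have hKx : ∀ i, BM t0 τ (fun t => (K t).mulVec (x t0) i) := fun i =>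
    BM.mulVec i (hKb i) fun k => .of_continuousOn continuousOn_const
  have main : (fun i => ∫ ρ in t0..t, ((Φ ρ)ᵀ * (C ρ)ᵀ).mulVec (y ρ) i)
      - Xi n k0 t0 C Φ g x t = (Psi n k0 t0 C Φ t).mulVec (x t0) := by
    funext i
    rw [Pi.sub_apply, sub_eq_iff_eq_add]
    have h1 : Xi n k0 t0 C Φ g x t i = ∫ ρ in t0..t, (K ρ).mulVec (p ρ) i := rfl
    have h2 : (Psi n k0 t0 C Φ t).mulVec (x t0) i = ∫ ρ in t0..t, (K ρ).mulVec (x t0) i := by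
      have : ∀ ρ, (K ρ).mulVec (x t0) i = ∑ j, K ρ i j * x t0 j := fun _ => rfl
      simp only [this]
      rw [intervalIntegral.integral_finsetSum fun j _ =>
        ((hKb i j).intervalIntegrable ht').mul_const _]
      simp only [intervalIntegral.integral_mul_const]
      rfl
    rw [h1, h2, ← intervalIntegral.integral_add ((hKx i).intervalIntegrable ht')
      ((hKp i).intervalIntegrable ht')]
    apply intervalIntegral.integral_congr
    intro r hr
    rw [uIcc_of_le ht'.1] at hr
    have hr' : r ∈ Set.Icc t0 τ := ⟨hr.1, hr.2.trans ht'.2⟩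
    simp only
    rw [hy r hr', hvc r hr', Matrix.mulVec_mulVec, Matrix.mulVec_mulVec, ← Pi.add_apply,
      ← Matrix.mulVec_add]
  rw [main, Matrix.mulVec_mulVec,
    Matrix.nonsing_inv_mul _ ((Matrix.isUnit_iff_isUnit_det _).1 (hΨ t htt)), Matrix.one_mulVec]
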